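/- Let ω = e^{2πi/3}. For all complex numbers α, β, γ, δ, ε, the 3 × 4 complex matrix M′ = [[β, γ+δ, ε, 1], [α, ω²β, γ+ωδ, ε], [1, −α, ωβ, γ+ω²δ]] has rank at least 2 (equivalently, M′ is not of rank at most 1, i.e., M′ does not correspond to a product vector). -/

import Mathlib

open Matrix

/-!
Suppose all `2 × 2` minors of `M′` vanish. The minors through the corner entry `1` of the last row
give `β (γ + ω²δ) = 1`, so `β` is invertible, together with `α = ωβ³` and `β⁵ = -1`. They also
determine `γ + δ`, `γ + ωδ`, `γ + ω²δ` in terms of `β`. These three entries have vanishing sum when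
weighted by `1, ω, ω²`, but in terms of `β` that sum is `β⁴ (1 - ω - ω²) = 2β⁴`, forcing `2 = 0`.
-/

theorem det_submatrix_eq_zero_of_rank_lt {R m n k : Type*} [CommRing R] [IsDomain R] [Fintype n]
    [Fintype k] [DecidableEq k] {A : Matrix m n R} (hA : A.rank < Fintype.card k)
    (r : k → m) (c : k → n) : (A.submatrix r c).det = 0 := by
  by_contra hdet
  exact hA.not_ge ((rank_of_det_ne_zero hdet).symm.trans_le (rank_submatrix_le A r c))

theorem apply_mul_apply_eq_of_rank_lt_two {R m n : Type*} [CommRing R] [IsDomain R] [Fintype n]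
    {A : Matrix m n R} (hA : A.rank < 2) (i j : m) (k l : n) :
    A i k * A j l = A i l * A j k := by
  have hdet : (A.submatrix ![i, j] ![k, l]).det = 0 :=
    det_submatrix_eq_zero_of_rank_lt (by simpa using hA) _ _
  rw [det_fin_two, sub_eq_zero] at hdet
  simpa using hdet

section EntangledMatrix

variable {R : Type*} [CommRing R]

/-- The matrix `M′` of the general element of the subspace `S` of `ℂ³ ⊗ ℂ⁴` whose coefficient on the
sixth basis vector is `1`, with entries in an arbitrary commutative ring. -/
def entangledMatrix (ω α β γ δ ε : R) : Matrix (Fin 3) (Fin 4) R :=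
  !![β, γ + δ, ε, 1;
     α, ω ^ 2 * β, γ + ω * δ, ε;
     1, -α, ω * β, γ + ω ^ 2 * δ]

variable {ω : R}

theorem pow_three_eq_one_of_one_add_add_sq_eq_zero (hω : 1 + ω + ω ^ 2 = 0) : ω ^ 3 = 1 := by
  linear_combination (ω - 1) * hω

theorem cubeRoot_weighted_sum_eq_zero (hω : 1 + ω + ω ^ 2 = 0) (γ δ : R) :
    (γ + δ) + ω * (γ + ω * δ) + ω ^ 2 * (γ + ω ^ 2 * δ) = 0 := by
  have hω3 := pow_three_eq_one_of_one_add_add_sq_eq_zero hω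
  linear_combination (γ + δ) * hω + ω * δ * hω3

theorem two_eq_zero_of_entangledMatrix_minors {α β γ δ ε : R} (hω : 1 + ω + ω ^ 2 = 0)
    (hM : ∀ i j k l, entangledMatrix ω α β γ δ ε i k * entangledMatrix ω α β γ δ ε j l =
      entangledMatrix ω α β γ δ ε i l * entangledMatrix ω α β γ δ ε j k) :
    (2 : R) = 0 := by
  have hω3 := pow_three_eq_one_of_one_add_add_sq_eq_zero hω
  have h01 : -(β * α) = γ + δ := by simpa [entangledMatrix] using hM 0 2 0 1
  have h02 : β * (ω * β) = ε := by simpa [entangledMatrix] using hM 0 2 0 2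
  have h03 : β * (γ + ω ^ 2 * δ) = 1 := by simpa [entangledMatrix] using hM 0 2 0 3
  have h11 : -(α * α) = ω ^ 2 * β := by simpa [entangledMatrix] using hM 1 2 0 1
  have h12 : α * (ω * β) = γ + ω * δ := by simpa [entangledMatrix] using hM 1 2 0 2
  have h13 : α * (γ + ω ^ 2 * δ) = ε := by simpa [entangledMatrix] using hM 1 2 0 3
  have hα : α = ω * β ^ 3 := by linear_combination (-α) * h03 + β * h13 - β * h02
  have hβ : β ^ 5 = -1 := by
    have hωβ : ω ^ 2 * β * (β ^ 5 + 1) = 0 := by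
      rw [hα] at h11
      linear_combination -h11
    linear_combination ω * (γ + ω ^ 2 * δ) * hωβ - (β ^ 5 + 1) * (ω ^ 3 * h03 + hω3)
  have hγδ₀ : γ + δ = -ω * β ^ 4 := by
    rw [← h01, hα]
    ring
  have hγδ₁ : γ + ω * δ = ω ^ 2 * β ^ 4 := by
    rw [← h12, hα]
    ring
  have hγδ₂ : γ + ω ^ 2 * δ = -β ^ 4 := by
    linear_combination (γ + ω ^ 2 * δ) * hβ - β ^ 4 * h03
  have hβ4 : 2 * β ^ 4 = 0 := by
    have hsum := cubeRoot_weighted_sum_eq_zero hω γ δ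
    rw [hγδ₀, hγδ₁, hγδ₂] at hsum
    linear_combination hsum + β ^ 4 * (hω - hω3)
  linear_combination 2 * hβ - β * hβ4

theorem stmt9_general [IsDomain R] (hω : 1 + ω + ω ^ 2 = 0) (h2 : (2 : R) ≠ 0) (α β γ δ ε : R) :
    2 ≤ (entangledMatrix ω α β γ δ ε).rank := by
  by_contra! hrank
  exact h2 (two_eq_zero_of_entangledMatrix_minors hω (apply_mul_apply_eq_of_rank_lt_two hrank))

end EntangledMatrix

theorem one_add_add_sq_eq_zero_of_isPrimitiveRoot {R : Type*} [CommRing R] [IsDomain R] {ω : R}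
    (hω : IsPrimitiveRoot ω 3) : 1 + ω + ω ^ 2 = 0 := by
  simpa [Finset.sum_range_succ] using hω.geom_sum_eq_zero (by norm_num)

/-- with `ω = e^{2πi/3}`, for all complex `α β γ δ ε` the matrix
`M′ = [[β, γ+δ, ε, 1], [α, ω²β, γ+ωδ, ε], [1, −α, ωβ, γ+ω²δ]]` has rank at least 2. -/
theorem stmt9 (ω : ℂ) (hω : ω = Complex.exp (2 * Real.pi * Complex.I / 3))
    (α β γ δ ε : ℂ) :
    2 ≤ (!![β, γ + δ, ε, 1;
            α, ω^2 * β, γ + ω * δ, ε;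
            1, -α, ω * β, γ + ω^2 * δ] : Matrix (Fin 3) (Fin 4) ℂ).rank := by
  have hprim : IsPrimitiveRoot ω 3 := hω ▸ mod_cast Complex.isPrimitiveRoot_exp 3 three_ne_zero
  exact stmt9_general (one_add_add_sq_eq_zero_of_isPrimitiveRoot hprim) two_ne_zero α β γ δ ε
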